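/- arXiv:2011.03887 — 2 statements merged into one kernel-verified Lean document; each statement's English description precedes it below -/
import Mathlib

section
/- Let n be a positive integer and let R = ℤ[X]/(X^n). For every complex number s with Re(s) > 1, the series Σ_{k≥1} a_R(k) k^{−s} converges and equals the product ∏_{j=1}^{n} ζ(js − (j−1)), where ζ is the Riemann zeta function. -/
/-- `idealCount R k` is the number of ideals `I` of `R` such that `R ⧸ I` is finite
with exactly `k` elements. -/
noncomputable def idealCount (R : Type) [CommRing R] (k : ℕ) : ℕ :=
  Set.ncard {I : Ideal R | Nat.card (R ⧸ I) = k}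

namespace IZ

open Polynomial

/-- Colon ideal `(I : X)`. -/
noncomputable def colX (I : Ideal ℤ[X]) : Ideal ℤ[X] := Submodule.comap (LinearMap.mulLeft ℤ[X] (X : ℤ[X])) I

lemma mem_colX {I : Ideal ℤ[X]} {p : ℤ[X]} : p ∈ colX I ↔ X * p ∈ I := Iff.rfl

/-- Ideal of constant coefficients. -/
noncomputable def KI (I : Ideal ℤ[X]) : Ideal ℤ := I.map (constantCoeff : ℤ[X] →+* ℤ)

lemma mem_KI {I : Ideal ℤ[X]} {c : ℤ} : c ∈ KI I ↔ ∃ g : ℤ[X], C c + X * g ∈ I := by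
  unfold KI
  rw [Ideal.mem_map_iff_of_surjective _ constantCoeff_surjective]
  constructor
  · rintro ⟨p, hp, rfl⟩
    refine ⟨p.divX, ?_⟩
    have := Polynomial.X_mul_divX_add p
    rw [constantCoeff_apply, add_comm, this]
    exact hp
  · rintro ⟨g, hg⟩
    exact ⟨_, hg, by simp⟩

/-- generator of the constant coefficient ideal -/
noncomputable def dd (I : Ideal ℤ[X]) : ℕ := Ideal.absNorm (KI I)

lemma dd_dvd {I : Ideal ℤ[X]} {c : ℤ} : (dd I : ℤ) ∣ c ↔ c ∈ KI I := by
  rw [← Ideal.mem_span_singleton, dd, Int.ideal_span_absNorm_eq_self]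

/-- multiplication by X into the quotient -/
noncomputable def mu (I : Ideal ℤ[X]) : ℤ[X] →ₗ[ℤ[X]] (ℤ[X] ⧸ I) :=
  (Submodule.mkQ I) ∘ₗ (LinearMap.mulLeft ℤ[X] (X : ℤ[X]))

lemma mu_apply (I : Ideal ℤ[X]) (p : ℤ[X]) : mu I p = Ideal.Quotient.mk I (X * p) := rfl

lemma ker_mu (I : Ideal ℤ[X]) : LinearMap.ker (mu I) = colX I := by
  ext p
  rw [LinearMap.mem_ker, mu_apply, Ideal.Quotient.eq_zero_iff_mem, mem_colX]

lemma card_range (I : Ideal ℤ[X]) : Nat.card (LinearMap.range (mu I)) = Nat.card (ℤ[X] ⧸ colX I) := by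
  rw [← ker_mu]
  exact (Nat.card_congr (mu I).quotKerEquivRange.toEquiv).symm

lemma card_coker (I : Ideal ℤ[X]) :
    Nat.card ((ℤ[X] ⧸ I) ⧸ LinearMap.range (mu I)) = dd I := by
  let φ : ℤ →+ ((ℤ[X] ⧸ I) ⧸ LinearMap.range (mu I)) :=
    ((LinearMap.range (mu I)).mkQ.toAddMonoidHom.comp (Ideal.Quotient.mk I).toAddMonoidHom).comp
      (C : ℤ →+* ℤ[X]).toAddMonoidHom
  have hφ : ∀ c, φ c = (LinearMap.range (mu I)).mkQ (Ideal.Quotient.mk I (C c)) := fun c => rfl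
  have hs : Function.Surjective φ := by
    intro y
    obtain ⟨z, rfl⟩ := Submodule.mkQ_surjective _ y
    obtain ⟨p, rfl⟩ := Ideal.Quotient.mk_surjective z
    refine ⟨p.coeff 0, ?_⟩
    rw [hφ, ← sub_eq_zero, ← map_sub, Submodule.mkQ_apply, Submodule.Quotient.mk_eq_zero]
    refine ⟨-p.divX, ?_⟩
    rw [mu_apply, ← map_sub]
    congr 1
    have := Polynomial.X_mul_divX_add p
    linear_combination -this
  have hk : φ.ker = (KI I).toAddSubgroup := by
    ext c
    rw [AddMonoidHom.mem_ker, hφ, Submodule.mkQ_apply, Submodule.Quotient.mk_eq_zero,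
      Submodule.mem_toAddSubgroup, mem_KI]
    constructor
    · rintro ⟨g, hg⟩
      refine ⟨-g, ?_⟩
      rw [mu_apply, eq_comm, Ideal.Quotient.eq] at hg
      convert hg using 1; ring
    · rintro ⟨g, hg⟩
      refine ⟨-g, ?_⟩
      rw [mu_apply, eq_comm, Ideal.Quotient.eq]
      convert hg using 1; ring
  rw [← Nat.card_congr (QuotientAddGroup.quotientKerEquivOfSurjective φ hs).toEquiv, hk]
  rfl

lemma card_quot (I : Ideal ℤ[X]) :
    Nat.card (ℤ[X] ⧸ I) = Nat.card (ℤ[X] ⧸ colX I) * dd I := by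
  rw [Submodule.card_eq_card_quotient_mul_card (LinearMap.range (mu I)), card_range, card_coker,
    mul_comm]

lemma card_ker (J : Ideal ℤ[X]) [Finite (ℤ[X] ⧸ J)] :
    Nat.card {x : ℤ[X] ⧸ J // Ideal.Quotient.mk J X * x = 0} = dd J := by
  let f : (ℤ[X] ⧸ J) →ₗ[ℤ[X]] (ℤ[X] ⧸ J) := LinearMap.lsmul ℤ[X] _ X
  have hf : ∀ x, f x = Ideal.Quotient.mk J X * x := by
    intro x
    obtain ⟨p, rfl⟩ := Ideal.Quotient.mk_surjective x
    rfl
  have hr : LinearMap.range f = LinearMap.range (mu J) := by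
    ext y
    constructor
    · rintro ⟨x, rfl⟩
      obtain ⟨p, rfl⟩ := Ideal.Quotient.mk_surjective x
      exact ⟨p, rfl⟩
    · rintro ⟨p, rfl⟩
      exact ⟨Ideal.Quotient.mk J p, rfl⟩
  have h1 := Submodule.card_eq_card_quotient_mul_card (LinearMap.ker f)
  have h2 := Submodule.card_eq_card_quotient_mul_card (LinearMap.range f)
  rw [Nat.card_congr f.quotKerEquivRange.toEquiv, hr] at h1
  rw [hr, card_coker] at h2
  have h3 : Nat.card {x : ℤ[X] ⧸ J // Ideal.Quotient.mk J X * x = 0} = Nat.card (LinearMap.ker f) :=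
    Nat.card_congr (Equiv.subtypeEquivRight fun x => by rw [LinearMap.mem_ker, hf])
  have h4 : 0 < Nat.card (LinearMap.range (mu J)) := Nat.card_pos
  rw [h3]
  apply Nat.eq_of_mul_eq_mul_left h4
  linarith

/-- solutions -/
abbrev Sol (J : Ideal ℤ[X]) (D : ℕ) :=
  {x : ℤ[X] ⧸ J // (D : ℤ[X] ⧸ J) + Ideal.Quotient.mk J X * x = 0}

lemma card_sol (J : Ideal ℤ[X]) [Finite (ℤ[X] ⧸ J)] (D : ℕ) (h : dd J ∣ D) :
    Nat.card (Sol J D) = dd J := by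
  have h' : (D : ℤ) ∈ KI J := dd_dvd.1 (by exact_mod_cast h)
  obtain ⟨g, hg⟩ := mem_KI.1 h'
  have hg' : (D : ℤ[X] ⧸ J) + Ideal.Quotient.mk J X * Ideal.Quotient.mk J g = 0 := by
    rw [← Ideal.Quotient.eq_zero_iff_mem] at hg
    simpa using hg
  rw [← card_ker J]
  refine Nat.card_congr ⟨fun x => ⟨x.1 - Ideal.Quotient.mk J g, ?_⟩,
    fun x => ⟨x.1 + Ideal.Quotient.mk J g, ?_⟩, fun x => ?_, fun x => ?_⟩
  · linear_combination x.2 - hg'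
  · linear_combination x.2 + hg'
  · simp
  · simp

/-- The ideal attached to a solution -/
noncomputable def II (J : Ideal ℤ[X]) (D : ℕ) (x : Sol J D) : Ideal ℤ[X] where
  carrier := {p | ∃ c : ℤ, p.coeff 0 = c * D ∧ Ideal.Quotient.mk J p.divX = c * x.1}
  zero_mem' := ⟨0, by simp, by simp⟩
  add_mem' := by
    rintro p q ⟨c, h1, h2⟩ ⟨e, h3, h4⟩
    refine ⟨c + e, by simp [h1, h3, add_mul], ?_⟩
    rw [divX_add, map_add, h2, h4]
    push_cast; ring
  smul_mem' := by
    rintro q p ⟨c, h1, h2⟩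
    have hp : Ideal.Quotient.mk J p = 0 := by
      rw [← Polynomial.X_mul_divX_add p, h1, map_add, map_mul, h2]
      have := x.2
      simp only [map_mul, map_natCast, eq_intCast, map_intCast]
      linear_combination (c : ℤ[X] ⧸ J) * this
    refine ⟨q.coeff 0 * c, by simp [mul_coeff_zero, h1, mul_assoc], ?_⟩
    have : (q * p).divX = C (q.coeff 0) * p.divX + q.divX * p := by
      apply mul_left_cancel₀ (X_ne_zero (R := ℤ))
      have e1 := Polynomial.X_mul_divX_add p
      have e2 := Polynomial.X_mul_divX_add q
      have e3 := Polynomial.X_mul_divX_add (q * p)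
      rw [mul_coeff_zero, C_mul] at e3
      linear_combination e3 - C (q.coeff 0) * e1 - p * e2
    rw [smul_eq_mul, this, map_add, map_mul, map_mul, hp, h2]
    simp [mul_assoc]

lemma mem_II {J : Ideal ℤ[X]} {D : ℕ} {x : Sol J D} {p : ℤ[X]} :
    p ∈ II J D x ↔ ∃ c : ℤ, p.coeff 0 = c * D ∧ Ideal.Quotient.mk J p.divX = c * x.1 := Iff.rfl

lemma divX_X_mul' (g : ℤ[X]) : (X * g).divX = g := by
  ext k
  rw [coeff_divX, coeff_X_mul]

lemma divX_aux (c : ℤ) (g : ℤ[X]) : (C c + X * g).divX = g := by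
  rw [divX_add, divX_C, zero_add, divX_X_mul']

lemma colX_II {J : Ideal ℤ[X]} {D : ℕ} (hD : 0 < D) (x : Sol J D) : colX (II J D x) = J := by
  ext p
  rw [mem_colX, mem_II]
  constructor
  · rintro ⟨c, h1, h2⟩
    simp at h1
    have : c = 0 := by rcases h1 with h | h <;> omega
    rw [this, divX_X_mul'] at h2
    rw [← Ideal.Quotient.eq_zero_iff_mem, h2]; simp
  · intro h
    refine ⟨0, by simp, ?_⟩
    rw [divX_X_mul', Ideal.Quotient.eq_zero_iff_mem.2 h]; simp

lemma dd_II {J : Ideal ℤ[X]} {D : ℕ} (x : Sol J D) : dd (II J D x) = D := by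
  have : KI (II J D x) = Ideal.span {(D : ℤ)} := by
    ext c
    rw [mem_KI, Ideal.mem_span_singleton]
    constructor
    · rintro ⟨g, e, h1, -⟩
      simp at h1
      exact ⟨e, by rw [h1, mul_comm]⟩
    · rintro ⟨e, rfl⟩
      obtain ⟨g, hg⟩ := Ideal.Quotient.mk_surjective ((e : ℤ[X] ⧸ J) * x.1)
      refine ⟨g, e, by simp [mul_comm], ?_⟩
      rw [divX_aux, hg]
  rw [dd, this]
  simp

lemma II_inj {J : Ideal ℤ[X]} {D : ℕ} (hD : 0 < D) : Function.Injective (II J D) := by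
  intro x y h
  obtain ⟨g, hg⟩ := Ideal.Quotient.mk_surjective x.1
  have h1 : C (D : ℤ) + X * g ∈ II J D x := ⟨1, by simp, by rw [divX_aux, hg]; simp⟩
  rw [h] at h1
  obtain ⟨c, h2, h3⟩ := h1
  simp at h2
  have : c = 1 := by
    have : (D : ℤ) * (c - 1) = 0 := by linear_combination -h2
    rcases mul_eq_zero.1 this with h | h <;> omega
  rw [divX_aux, hg, this] at h3
  exact Subtype.ext (by simpa using h3)

lemma II_surj (I J : Ideal ℤ[X]) (D : ℕ) (h1 : colX I = J) (h2 : dd I = D) :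
    ∃ x : Sol J D, II J D x = I := by
  subst h1 h2
  obtain ⟨g, hg⟩ := mem_KI.1 (dd_dvd.1 (dvd_refl (dd I : ℤ)))
  have hx : ((dd I : ℕ) : ℤ[X] ⧸ colX I) + Ideal.Quotient.mk _ X * Ideal.Quotient.mk _ g = 0 := by
    have : C (dd I : ℤ) + X * g ∈ colX I := I.mul_mem_left _ hg
    rw [← Ideal.Quotient.eq_zero_iff_mem] at this
    simpa using this
  refine ⟨⟨_, hx⟩, ?_⟩
  ext p
  have key : ∀ c : ℤ, p.coeff 0 = c * dd I →
      (Ideal.Quotient.mk (colX I) p.divX = (c : ℤ[X] ⧸ colX I) * Ideal.Quotient.mk _ g ↔ p ∈ I) := by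
    intro c hc
    have e : p = X * (p.divX - C c * g) + C c * (C (dd I : ℤ) + X * g) := by
      have := Polynomial.X_mul_divX_add p
      rw [hc, C_mul] at this
      linear_combination -this
    have e2 : (c : ℤ[X] ⧸ colX I) * Ideal.Quotient.mk _ g = Ideal.Quotient.mk _ (C c * g) := by simp
    rw [e2, Ideal.Quotient.eq, mem_colX]
    conv_rhs => rw [e]
    rw [Ideal.add_mem_iff_left _ (I.mul_mem_left _ hg)]
  rw [mem_II]
  constructor
  · rintro ⟨c, h1, h2⟩
    exact (key c h1).1 h2
  · intro hp
    have : p.coeff 0 ∈ KI I := mem_KI.2 ⟨p.divX, by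
      rw [add_comm, Polynomial.X_mul_divX_add p]; exact hp⟩
    obtain ⟨c, hc⟩ := dd_dvd.2 this
    rw [mul_comm] at hc
    exact ⟨c, hc, (key c hc).2 hp⟩

lemma dd_dvd_dd (I : Ideal ℤ[X]) : dd (colX I) ∣ dd I := by
  obtain ⟨g, hg⟩ := mem_KI.1 (dd_dvd.1 (dvd_refl (dd I : ℤ)))
  have : C (dd I : ℤ) + X * g ∈ colX I := I.mul_mem_left _ hg
  exact_mod_cast dd_dvd.2 (mem_KI.2 ⟨g, this⟩)

lemma dd_pos (I : Ideal ℤ[X]) [Finite (ℤ[X] ⧸ I)] : 0 < dd I := by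
  have h : 0 < Nat.card (ℤ[X] ⧸ I) := Nat.card_pos
  rw [card_quot] at h
  exact Nat.pos_of_mul_pos_left h

lemma finite_colX (I : Ideal ℤ[X]) [Finite (ℤ[X] ⧸ I)] : Finite (ℤ[X] ⧸ colX I) := by
  have h : 0 < Nat.card (ℤ[X] ⧸ I) := Nat.card_pos
  rw [card_quot] at h
  exact (Nat.card_pos_iff.1 (Nat.pos_of_mul_pos_right h)).2

/-- ideals containing X^n, finite index -/
abbrev T (n : ℕ) := {I : Ideal ℤ[X] // X ^ n ∈ I ∧ Finite (ℤ[X] ⧸ I)}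

/-- base map -/
noncomputable def Phi (n : ℕ) (I : T (n + 1)) : T n × ℕ+ :=
  haveI := I.2.2
  haveI := finite_colX I.1
  (⟨colX I.1, by rw [mem_colX, ← pow_succ']; exact I.2.1, inferInstance⟩,
    ⟨dd I.1 / dd (colX I.1), Nat.div_pos (Nat.le_of_dvd (dd_pos _) (dd_dvd_dd _)) (dd_pos _)⟩)

lemma Phi_iff (n : ℕ) (I : T (n + 1)) (p : T n × ℕ+) :
    Phi n I = p ↔ colX I.1 = p.1.1 ∧ dd I.1 = dd p.1.1 * p.2 := by
  have := I.2.2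
  have := finite_colX I.1
  have h0 := dd_pos (colX I.1)
  obtain ⟨k, hk⟩ := dd_dvd_dd I.1
  obtain ⟨⟨J, hJ⟩, m⟩ := p
  rw [Phi, Prod.ext_iff, Subtype.ext_iff, ← PNat.coe_inj]
  simp only [PNat.mk_coe]
  constructor
  · rintro ⟨h1, h2⟩
    refine ⟨h1, ?_⟩
    rw [← h1, ← h2, hk, Nat.mul_div_cancel_left _ h0]
  · rintro ⟨h1, h2⟩
    refine ⟨h1, ?_⟩
    rw [h2, ← h1, Nat.mul_div_cancel_left _ h0]

lemma card_fiber (n : ℕ) (p : T n × ℕ+) : Nat.card {I : T (n + 1) // Phi n I = p} = dd p.1.1 := by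
  have := p.1.2.2
  have hD : 0 < dd p.1.1 * p.2 := Nat.mul_pos (dd_pos _) p.2.pos
  rw [← card_sol p.1.1 (dd p.1.1 * p.2) (dvd_mul_right _ _)]
  symm
  have hmem : ∀ x : Sol p.1.1 (dd p.1.1 * p.2), X ^ (n+1) ∈ II _ _ x ∧ Finite (ℤ[X] ⧸ II _ _ x) := by
    intro x
    constructor
    · rw [pow_succ', ← mem_colX, colX_II hD]; exact p.1.2.1
    · apply (Nat.card_pos_iff.1 _).2
      rw [card_quot, colX_II hD, dd_II]
      exact Nat.mul_pos Nat.card_pos hD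
  refine Nat.card_congr (Equiv.ofBijective
    (fun x => ⟨⟨II _ _ x, hmem x⟩, (Phi_iff _ _ _).2 ⟨colX_II hD x, dd_II x⟩⟩) ⟨?_, ?_⟩)
  · intro x y h
    exact II_inj hD (congrArg (fun z => z.1.1) h)
  · rintro ⟨I, hI⟩
    obtain ⟨h1, h2⟩ := (Phi_iff _ _ _).1 hI
    obtain ⟨x, hx⟩ := II_surj I.1 _ _ h1 h2
    exact ⟨x, Subtype.ext (Subtype.ext hx)⟩

/-- the norm -/
noncomputable def NN (I : Ideal ℤ[X]) : ℕ := Nat.card (ℤ[X] ⧸ I)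

lemma NN_pos {n : ℕ} (I : T n) : 0 < NN I.1 := by
  have := I.2.2
  exact Nat.card_pos

/-- the summand -/
noncomputable def FF (s t : ℂ) (I : Ideal ℤ[X]) : ℂ := (NN I : ℂ) ^ (-s) * (dd I : ℂ) ^ (-t)

/-- the summand on the base -/
noncomputable def GG (n : ℕ) (s t : ℂ) (p : T n × ℕ+) : ℂ :=
  (NN p.1.1 : ℂ) ^ (-s) * (dd p.1.1 : ℂ) ^ (-(s + t)) * (p.2 : ℂ) ^ (-(s + t))

lemma FF_eq (n : ℕ) (s t : ℂ) (p : T n × ℕ+) (I : T (n + 1)) (h : Phi n I = p) :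
    FF s t I.1 = GG n s t p := by
  have := p.1.2.2
  obtain ⟨h1, h2⟩ := (Phi_iff _ _ _).1 h
  have h3 : NN I.1 = NN p.1.1 * (dd p.1.1 * p.2) := by rw [NN, card_quot, h1, h2]; rfl
  have hd : (dd p.1.1 : ℂ) ≠ 0 := by exact_mod_cast (dd_pos p.1.1).ne'
  have hm : ((p.2 : ℕ) : ℂ) ≠ 0 := by exact_mod_cast p.2.pos.ne'
  rw [FF, GG, h3, h2, Nat.cast_mul, Complex.natCast_mul_natCast_cpow, Nat.cast_mul,
    Complex.natCast_mul_natCast_cpow, Complex.natCast_mul_natCast_cpow,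
    show -(s + t) = -s + -t by ring, Complex.cpow_add _ _ hd, Complex.cpow_add _ _ hm]
  ring

lemma dd_GG (n : ℕ) (s t : ℂ) (p : T n × ℕ+) :
    (dd p.1.1 : ℂ) * GG n s t p = FF s (s + t - 1) p.1.1 * (p.2 : ℂ) ^ (-(s + t)) := by
  have := p.1.2.2
  have hd : (dd p.1.1 : ℂ) ≠ 0 := by exact_mod_cast (dd_pos p.1.1).ne'
  rw [FF, GG, show -(s + t - 1) = -(s + t) + 1 by ring, Complex.cpow_add _ _ hd, Complex.cpow_one]
  ring

lemma zeta_hasSum (s : ℂ) (hs : 1 < s.re) : HasSum (fun m : ℕ+ => (m : ℂ) ^ (-s)) (riemannZeta s) := by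
  have h1 : Summable (fun n : ℕ => 1 / (n : ℂ) ^ s) := Complex.summable_one_div_nat_cpow.2 hs
  have h2 := h1.hasSum
  rw [← zeta_eq_tsum_one_div_nat_cpow hs] at h2
  rw [← PNat.coe_injective.hasSum_iff] at h2
  · convert h2 using 2 with m
    simp [Complex.cpow_neg]
  · intro n hn
    have h : n = 0 := by
      by_contra h
      exact hn ⟨⟨n, Nat.pos_of_ne_zero h⟩, rfl⟩
    subst h
    have : s ≠ 0 := by
      rintro rfl
      simp at hs
      linarith
    simp [this]

lemma hasSum_mul_aux {α β : Type} (f : α → ℂ) (g : β → ℂ) (a b : ℂ) (hf : HasSum f a)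
    (hg : HasSum g b) : HasSum (fun p : α × β => f p.1 * g p.2) (a * b) :=
  hf.mul hg (summable_mul_of_summable_norm hf.summable.norm hg.summable.norm)

lemma main_sum (n : ℕ) : ∀ s t : ℂ, 1 < s.re → 0 ≤ t.re →
    HasSum (fun I : T n => FF s t I.1)
      (∏ j ∈ Finset.range n, riemannZeta (((j : ℂ) + 1) * s + t - j)) := by
  induction n with
  | zero =>
    intro s t hs ht
    have h1 : ∀ I : T 0, I.1 = ⊤ := fun I => (Ideal.eq_top_iff_one _).2 (by simpa using I.2.1)
    have hf : Finite (ℤ[X] ⧸ (⊤ : Ideal ℤ[X])) := inferInstance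
    let I0 : T 0 := ⟨⊤, trivial, hf⟩
    have h2 : FF s t I0.1 = 1 := by
      have e1 : NN (⊤ : Ideal ℤ[X]) = 1 := Nat.card_unique
      have e2 : dd (⊤ : Ideal ℤ[X]) = 1 := by
        rw [dd, KI, Ideal.map_top, Ideal.absNorm_top]
      show FF s t ⊤ = 1
      rw [FF, e1, e2]; simp
    rw [Finset.range_zero, Finset.prod_empty, ← h2]
    exact hasSum_single I0 fun I hI => absurd (Subtype.ext (h1 I)) hI
  | succ n ih =>
    intro s t hs ht
    have ih' := ih s (s + t - 1) hs (by simp; linarith)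
    have hz := zeta_hasSum (s + t) (by simp; linarith)
    have hprod : HasSum (fun p : T n × ℕ+ => (dd p.1.1 : ℂ) * GG n s t p)
        ((∏ j ∈ Finset.range n, riemannZeta (((j : ℂ) + 1) * s + (s + t - 1) - j)) *
          riemannZeta (s + t)) := by
      simp_rw [dd_GG]
      exact hasSum_mul_aux (fun I : T n => FF s (s + t - 1) I.1) (fun m : ℕ+ => (m : ℂ) ^ (-(s + t))) _ _ ih' hz
    have hfin : ∀ p : T n × ℕ+, Finite {I : T (n + 1) // Phi n I = p} := by
      intro p
      have := p.1.2.2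
      apply (Nat.card_pos_iff.1 _).2
      rw [card_fiber]
      exact dd_pos _
    have hfib : ∀ p : T n × ℕ+, HasSum (fun I : {I : T (n + 1) // Phi n I = p} => FF s t I.1.1)
        ((dd p.1.1 : ℂ) * GG n s t p) := by
      intro p
      have := hfin p
      have := Fintype.ofFinite {I : T (n + 1) // Phi n I = p}
      convert hasSum_fintype (fun I : {I : T (n + 1) // Phi n I = p} => FF s t I.1.1) using 1
      rw [Finset.sum_congr rfl (fun I _ => FF_eq n s t p I.1 I.2), Finset.sum_const, nsmul_eq_mul,
        Finset.card_univ, ← Nat.card_eq_fintype_card, card_fiber]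
    have hfibn : ∀ p : T n × ℕ+, ∑' I : {I : T (n + 1) // Phi n I = p}, ‖FF s t I.1.1‖ =
        ‖(dd p.1.1 : ℂ) * GG n s t p‖ := by
      intro p
      have := hfin p
      have := Fintype.ofFinite {I : T (n + 1) // Phi n I = p}
      rw [tsum_fintype, Finset.sum_congr rfl (fun I _ => by rw [FF_eq n s t p I.1 I.2]),
        Finset.sum_const, nsmul_eq_mul,
        Finset.card_univ, ← Nat.card_eq_fintype_card, card_fiber, norm_mul, Complex.norm_natCast]
    have hsum : Summable (fun q : (Σ p : T n × ℕ+, {I : T (n + 1) // Phi n I = p}) =>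
        FF s t q.2.1.1) := by
      apply Summable.of_norm
      rw [summable_sigma_of_nonneg (fun _ => norm_nonneg _)]
      refine ⟨fun p => ?_, ?_⟩
      · have := hfin p
        exact Summable.of_finite
      · simp_rw [hfibn]
        exact hprod.summable.norm
    have htot := (HasSum.of_sigma hfib hprod hsum.hasSum.cauchySeq)
    rw [← (Equiv.sigmaFiberEquiv (Phi n)).hasSum_iff, Finset.prod_range_succ']
    have hv : (∏ k ∈ Finset.range n, riemannZeta ((((k + 1 : ℕ) : ℂ) + 1) * s + t - ((k + 1 : ℕ) : ℂ))) *
        riemannZeta ((((0 : ℕ) : ℂ) + 1) * s + t - ((0 : ℕ) : ℂ)) =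
        (∏ j ∈ Finset.range n, riemannZeta (((j : ℂ) + 1) * s + (s + t - 1) - j)) *
          riemannZeta (s + t) := by
      congr 1
      · refine Finset.prod_congr rfl fun j _ => ?_
        congr 1
        push_cast
        ring
      · congr 1
        push_cast
        ring
    rw [hv]
    exact htot

/-- ideals of the quotient with prescribed norm -/
lemma idealCount_eq (n k : ℕ) (hk : 0 < k) :
    idealCount (ℤ[X] ⧸ Ideal.span {(X : ℤ[X]) ^ n}) k = Nat.card {I : T n // NN I.1 = k} := by
  have hcard : ∀ I : Ideal (ℤ[X] ⧸ Ideal.span {(X : ℤ[X]) ^ n}),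
      NN (I.comap (Ideal.Quotient.mk _)) = Nat.card ((ℤ[X] ⧸ Ideal.span {(X : ℤ[X]) ^ n}) ⧸ I) := by
    intro I
    let f : ℤ[X] →+* ((ℤ[X] ⧸ Ideal.span {(X : ℤ[X]) ^ n}) ⧸ I) :=
      (Ideal.Quotient.mk I).comp (Ideal.Quotient.mk _)
    have hf : Function.Surjective f :=
      Ideal.Quotient.mk_surjective.comp Ideal.Quotient.mk_surjective
    have hk : RingHom.ker f = I.comap (Ideal.Quotient.mk _) := by
      ext p
      rw [RingHom.mem_ker, Ideal.mem_comap, RingHom.comp_apply, Ideal.Quotient.eq_zero_iff_mem]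
    rw [NN, ← hk]
    exact Nat.card_congr (RingHom.quotientKerEquivOfSurjective hf).toEquiv
  have hmem : ∀ I : Ideal (ℤ[X] ⧸ Ideal.span {(X : ℤ[X]) ^ n}),
      X ^ n ∈ I.comap (Ideal.Quotient.mk _) := by
    intro I
    rw [Ideal.mem_comap, Ideal.Quotient.eq_zero_iff_mem.2 (Ideal.mem_span_singleton_self _)]
    exact I.zero_mem
  rw [idealCount, ← Nat.card_coe_set_eq]
  refine Nat.card_congr (Equiv.ofBijective (fun I =>
    ⟨⟨I.1.comap (Ideal.Quotient.mk _), hmem I.1, ?_⟩, ?_⟩) ⟨?_, ?_⟩)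
  · apply (Nat.card_pos_iff.1 _).2
    have := hcard I.1
    rw [NN, show Nat.card _ = k from I.2] at this
    omega
  · exact (hcard I.1).trans I.2
  · intro I J h
    exact Subtype.ext (Ideal.comap_injective_of_surjective _ Ideal.Quotient.mk_surjective
      (congrArg (fun z => z.1.1) h))
  · rintro ⟨⟨I, hI, hf⟩, hN⟩
    have hc : (I.map (Ideal.Quotient.mk (Ideal.span {(X : ℤ[X]) ^ n}))).comap
        (Ideal.Quotient.mk _) = I := by
      rw [Ideal.comap_map_of_surjective' _ Ideal.Quotient.mk_surjective, Ideal.mk_ker, sup_eq_left,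
        Ideal.span_singleton_le_iff_mem]
      exact hI
    refine ⟨⟨I.map (Ideal.Quotient.mk _), ?_⟩, Subtype.ext (Subtype.ext hc)⟩
    show Nat.card _ = k
    rw [← hcard, hc]
    exact hN

end IZ

/-- For `R = ℤ[X]/(X^n)` and `Re s > 1`, the ideal zeta function of `R` converges at `s`
and equals `∏_{j=1}^n ζ(js - (j-1))`. -/
theorem ideal_zeta_int_poly_quot_pow (n : ℕ) (hn : 0 < n) (s : ℂ) (hs : 1 < s.re) :
    HasSum
      (fun k : ℕ+ =>
        (idealCount (Polynomial ℤ ⧸ Ideal.span {(Polynomial.X : Polynomial ℤ) ^ n}) k : ℂ) /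
          (k : ℂ) ^ s)
      (∏ j ∈ Finset.range n, riemannZeta (((j : ℂ) + 1) * s - (j : ℂ))) := by
  have h := IZ.main_sum n s 0 hs (by simp)
  simp only [add_zero] at h
  let f : IZ.T n → ℕ+ := fun I => ⟨IZ.NN I.1, IZ.NN_pos I⟩
  rw [← (Equiv.sigmaFiberEquiv f).hasSum_iff] at h
  have hF : ∀ (k : ℕ+) (I : {I : IZ.T n // f I = k}), IZ.FF s 0 I.1.1 = ((k : ℕ) : ℂ) ^ (-s) := by
    rintro k ⟨I, rfl⟩
    simp [IZ.FF, f]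
  refine h.sigma fun k => ?_
  have hsum := h.summable.sigma_factor k
  have hk : ((k : ℕ) : ℂ) ^ (-s) ≠ 0 := by
    rw [Complex.cpow_ne_zero_iff]
    left
    exact_mod_cast k.pos.ne'
  have e : (fun I : {I : IZ.T n // f I = k} =>
      ((fun I : IZ.T n => IZ.FF s 0 I.1) ∘ (Equiv.sigmaFiberEquiv f)) ⟨k, I⟩) =
      fun _ => ((k : ℕ) : ℂ) ^ (-s) := by
    ext I
    exact hF k I
  rw [e] at hsum ⊢
  have hfin : Finite {I : IZ.T n // f I = k} := by
    by_contra hinf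
    rw [not_finite_iff_infinite] at hinf
    exact hk ((summable_const_iff _).1 hsum)
  have := Fintype.ofFinite {I : IZ.T n // f I = k}
  convert hasSum_fintype _ using 1
  rw [Finset.sum_const, nsmul_eq_mul, Finset.card_univ, ← Nat.card_eq_fintype_card,
    IZ.idealCount_eq n k k.pos, Complex.cpow_neg, div_eq_mul_inv]
  congr 2
  exact Nat.card_congr (Equiv.subtypeEquivRight fun I => by rw [← PNat.coe_inj]; rfl)
end

section
/- Let n be a positive integer, let R = ℤ[X]/(X^n), and let c = 1/(n!·(n−1)!). Then Σ_{k ≤ B} a_R(k) is asymptotically equivalent to c·B·(log B)^{n−1} as B → ∞. -/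
section
open Finset

/-- weighted counting function -/
def UU : ℕ → ℕ → ℕ → ℕ
  | 0, _, B => if 1 ≤ B then 1 else 0
  | n + 1, i, B => ∑ e ∈ Icc 1 B, e ^ i * UU n (i + 1) (B / e ^ (i + 1))

theorem UU_zero_right (n i : ℕ) : UU n i 0 = 0 := by
  cases n <;> simp [UU]

theorem div_pow_zero {B e i : ℕ} (h : B < e) : B / e ^ (i + 1) = 0 := by
  apply Nat.div_eq_of_lt
  exact h.trans_le (Nat.le_self_pow (by omega) e)

theorem sum_ext (F : ℕ → ℕ) (hF : F 0 = 0) (w : ℕ → ℕ) (i : ℕ) {B M : ℕ} (h : B ≤ M) :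
    ∑ e ∈ Icc 1 B, w e * F (B / e ^ (i + 1)) = ∑ e ∈ Icc 1 M, w e * F (B / e ^ (i + 1)) := by
  apply sum_subset (Icc_subset_Icc_right h)
  intro e he he'
  simp only [mem_Icc, not_and, not_le] at he he'
  rw [div_pow_zero (he' he.1), hF, mul_zero]

theorem UU_succ' (n i B : ℕ) :
    UU (n + 1) i B = ∑ e ∈ Icc 1 B, e ^ (i + n) * UU n i (B / e ^ (i + n + 1)) := by
  induction n generalizing i B with
  | zero => simp [UU]
  | succ n ih =>
    rw [UU]
    calc _ = ∑ e ∈ Icc 1 B, e ^ i * ∑ f ∈ Icc 1 B, f ^ (i + 1 + n) *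
            UU n (i + 1) (B / e ^ (i + 1) / f ^ (i + 1 + n + 1)) := by
          refine sum_congr rfl fun e _ => ?_
          rw [ih, sum_ext _ (UU_zero_right n (i+1)) (fun f => f ^ (i + 1 + n)) _ (Nat.div_le_self B _)]
      _ = ∑ f ∈ Icc 1 B, f ^ (i + 1 + n) * ∑ e ∈ Icc 1 B, e ^ i * 
            UU n (i + 1) (B / f ^ (i + 1 + n + 1) / e ^ (i + 1)) := by
          simp only [mul_sum]
          rw [sum_comm]
          refine sum_congr rfl fun f _ => sum_congr rfl fun e _ => ?_
          rw [Nat.div_div_eq_div_mul, Nat.div_div_eq_div_mul, mul_comm (e ^ (i + 1))]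
          ring
      _ = _ := by
          refine sum_congr rfl fun f _ => ?_
          rw [UU, sum_ext _ (UU_zero_right n (i+1)) (fun f => f ^ i) _ (Nat.div_le_self B _)]
          congr 2 <;> ring_nf

theorem UU_one (B : ℕ) : UU 1 0 B = B := by
  rw [UU_succ']
  have : ∀ e ∈ Icc 1 B, e ^ (0 + 0) * UU 0 0 (B / e ^ (0 + 0 + 1)) = 1 := by
    intro e he
    rw [mem_Icc] at he
    have : 1 ≤ B / e := (Nat.one_le_div_iff (by omega)).2 he.2
    simp [UU]
    omega
  rw [sum_congr rfl this]; simp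

/-- telescoping estimates; `u e = L - q log e` -/
theorem tele (q m : ℕ) (hq : 0 < q) (L : ℝ) (e : ℕ) (he : 1 ≤ e)
    (h : (q : ℝ) * Real.log (e + 1 : ℕ) ≤ L) :
    ((L - q * Real.log e) ^ (m + 1) - (L - q * Real.log (e + 1 : ℕ)) ^ (m + 1)) / (q * (m + 1))
      ≤ (L - q * Real.log e) ^ m / e ∧
    (L - q * Real.log (e + 1 : ℕ)) ^ m / (e + 1 : ℕ) ≤
    ((L - q * Real.log e) ^ (m + 1) - (L - q * Real.log (e + 1 : ℕ)) ^ (m + 1)) / (q * (m + 1)) := by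
  have he' : (0 : ℝ) < e := by exact_mod_cast he
  have hq' : (0 : ℝ) < q := by exact_mod_cast hq
  have h1 : Real.log (e + 1 : ℕ) - Real.log e ≤ 1 / e := by
    rw [← Real.log_div (by positivity) (by positivity)]
    refine (Real.log_le_sub_one_of_pos (by positivity)).trans_eq ?_
    push_cast; field_simp; ring
  have h2 : 1 / (e + 1 : ℕ) ≤ Real.log (e + 1 : ℕ) - Real.log e := by
    have : Real.log (e / (e + 1 : ℕ)) ≤ _ := (Real.log_le_sub_one_of_pos (by positivity))
    rw [Real.log_div (by positivity) (by positivity)] at this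
    have h3 : (e : ℝ) / (e + 1 : ℕ) - 1 = - (1 / (e + 1 : ℕ)) := by push_cast; field_simp; ring
    linarith
  set u := L - q * Real.log e with hu
  set v := L - q * Real.log (e + 1 : ℕ) with hv
  have hv0 : 0 ≤ v := by linarith
  have huv : u - v = q * (Real.log (e + 1 : ℕ) - Real.log e) := by rw [hu, hv]; ring
  have h0 : 0 ≤ Real.log (e + 1 : ℕ) - Real.log e := le_trans (by positivity) h2
  have hvu : v ≤ u := by nlinarith
  have g : u ^ (m + 1) - v ^ (m + 1) = (u - v) * ∑ i ∈ range (m + 1), u ^ i * v ^ (m - i) := by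
    have := (Commute.all u v).mul_geom_sum₂ (m + 1)
    rw [← this]; simp
  have s1 : ∑ i ∈ range (m + 1), u ^ i * v ^ (m - i) ≤ (m + 1) * u ^ m := by
    calc _ ≤ ∑ i ∈ range (m + 1), u ^ m := by
          refine sum_le_sum fun i hi => ?_
          rw [mem_range] at hi
          have hu0 : 0 ≤ u := hv0.trans hvu
          calc u ^ i * v ^ (m - i) ≤ u ^ i * u ^ (m - i) := by gcongr
            _ = u ^ m := by rw [← pow_add]; congr 1; omega
      _ = _ := by simp
  have s2 : (m + 1) * v ^ m ≤ ∑ i ∈ range (m + 1), u ^ i * v ^ (m - i) := by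
    calc _ = ∑ i ∈ range (m + 1), v ^ m := by simp
      _ ≤ _ := by
          refine sum_le_sum fun i hi => ?_
          rw [mem_range] at hi
          calc v ^ m = v ^ i * v ^ (m - i) := by rw [← pow_add]; congr 1; omega
            _ ≤ _ := by gcongr
  have hu0 : 0 ≤ u := hv0.trans hvu
  rw [g, huv]
  constructor
  · rw [div_le_iff₀ (by positivity)]
    calc _ ≤ q * (1 / e) * ((m + 1) * u ^ m) := by gcongr
      _ = _ := by ring
  · rw [le_div_iff₀ (by positivity)]
    calc _ = q * (1 / (e + 1 : ℕ)) * ((m + 1) * v ^ m) := by ring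
      _ ≤ _ := by gcongr

theorem main_sum_aux (q m : ℕ) (hq : 0 < q) (L : ℝ) (N : ℕ) (hN : 1 ≤ N) :
    (q : ℝ) * Real.log N ≤ L →
    ∑ e ∈ Icc 1 N, (L - q * Real.log e) ^ m / e ≤ L ^ m +
      (L ^ (m + 1) - (L - q * Real.log N) ^ (m + 1)) / (q * (m + 1)) ∧
    (L ^ (m + 1) - (L - q * Real.log N) ^ (m + 1)) / (q * (m + 1)) + (L - q * Real.log N) ^ m / N ≤
      ∑ e ∈ Icc 1 N, (L - q * Real.log e) ^ m / e := by
  induction N, hN using Nat.le_induction with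
  | base => intro h; simp
  | succ N hN ih =>
    intro h
    obtain ⟨t1, t2⟩ := tele q m hq L N hN h
    have hN' : (0 : ℝ) < N := by exact_mod_cast hN
    have hlog : Real.log N ≤ Real.log (N + 1 : ℕ) :=
      Real.log_le_log hN' (by push_cast; linarith)
    have h' : (q : ℝ) * Real.log N ≤ L := le_trans (by gcongr) h
    obtain ⟨i1, i2⟩ := ih h'
    rw [sum_Icc_succ_top (by omega)]
    rw [sub_div] at *
    constructor <;> linarith

theorem main_sum (q m : ℕ) (hq : 0 < q) (x : ℝ) (N : ℕ) (hN : 1 ≤ N)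
    (h1 : (N : ℝ) ^ q ≤ x) (h2 : x < ((N + 1 : ℕ) : ℝ) ^ q) :
    |∑ e ∈ Icc 1 N, (Real.log x - q * Real.log e) ^ m / e - Real.log x ^ (m + 1) / (q * (m + 1))|
      ≤ (q ^ m + 1) * (1 + Real.log x) ^ m := by
  have hN' : (0 : ℝ) < N := by exact_mod_cast hN
  have hN1 : (1 : ℝ) ≤ N := by exact_mod_cast hN
  have hq' : (0 : ℝ) < q := by exact_mod_cast hq
  have hx1 : 1 ≤ x := le_trans (one_le_pow₀ hN1) h1
  have hL : 0 ≤ Real.log x := Real.log_nonneg hx1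
  have l1 : (q : ℝ) * Real.log N ≤ Real.log x := by
    rw [← Real.log_pow]; exact Real.log_le_log (by positivity) h1
  have l2 : Real.log x ≤ q * Real.log (N + 1 : ℕ) := by
    rw [← Real.log_pow]; exact Real.log_le_log (by positivity) h2.le
  have l3 : Real.log (N + 1 : ℕ) - Real.log N ≤ 1 := by
    rw [← Real.log_div (by positivity) (by positivity)]
    refine (Real.log_le_sub_one_of_pos (by positivity)).trans ?_
    push_cast
    rw [sub_le_iff_le_add, div_le_iff₀ hN']; linarith
  obtain ⟨i1, i2⟩ := main_sum_aux q m hq (Real.log x) N hN l1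
  set u := Real.log x - q * Real.log N with hu
  have hu0 : 0 ≤ u := by linarith
  have huq : u ≤ q := by nlinarith
  have g0 : 0 ≤ u ^ (m + 1) / (q * (m + 1)) := by positivity
  have g1 : u ^ (m + 1) / (q * (m + 1)) ≤ q ^ m := by
    rw [div_le_iff₀ (by positivity)]
    calc u ^ (m + 1) ≤ q ^ (m + 1) := by gcongr
      _ = q ^ m * (q * 1) := by ring
      _ ≤ q ^ m * (q * (m + 1)) := by gcongr; linarith [(Nat.cast_nonneg m : (0:ℝ) ≤ m)]
  have g2 : 0 ≤ u ^ m / N := by positivity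
  have g3 : Real.log x ^ m ≤ (1 + Real.log x) ^ m := by gcongr; linarith
  have g4 : 1 ≤ (1 + Real.log x) ^ m := one_le_pow₀ (by linarith)
  have g5 : (q : ℝ) ^ m * 1 ≤ q ^ m * (1 + Real.log x) ^ m := by gcongr
  have g6 : (0 : ℝ) ≤ q ^ m := by positivity
  have g7 : 0 ≤ Real.log x ^ m := by positivity
  rw [sub_div] at *
  rw [abs_le]
  constructor <;> nlinarith

theorem step (F : ℕ → ℕ) (hF : F 0 = 0) (a : ℝ) (m p : ℕ) (E : ℝ → ℝ)
    (hE : ∀ y : ℝ, 1 ≤ y → |(F ⌊y⌋₊ : ℝ) - a * y * Real.log y ^ m| ≤ E y) (x : ℝ) (hx : 1 ≤ x) :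
    ∃ N : ℕ, 1 ≤ N ∧ (N : ℝ) ^ (p + 1) ≤ x ∧
    |((∑ e ∈ Icc 1 ⌊x⌋₊, e ^ p * F (⌊x⌋₊ / e ^ (p + 1)) : ℕ) : ℝ)
        - a / ((p + 1) * (m + 1)) * x * Real.log x ^ (m + 1)|
      ≤ |a| * x * (((p + 1 : ℕ) ^ m + 1) * (1 + Real.log x) ^ m)
        + ∑ e ∈ Icc 1 N, e ^ p * E (x / e ^ (p + 1)) := by
  have hx0 : 0 < x := by linarith
  set y := x ^ (((p + 1 : ℕ) : ℝ)⁻¹) with hy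
  have hyp : y ^ (p + 1) = x := Real.rpow_inv_natCast_pow hx0.le (by omega)
  have hy1 : 1 ≤ y := Real.one_le_rpow hx (by positivity)
  set N := ⌊y⌋₊ with hN
  have hN1 : 1 ≤ N := Nat.le_floor (by simpa using hy1)
  have h1 : (N : ℝ) ^ (p + 1) ≤ x := by
    rw [← hyp]; gcongr; exact Nat.floor_le (by linarith)
  have h2 : x < ((N + 1 : ℕ) : ℝ) ^ (p + 1) := by
    rw [← hyp]; gcongr; push_cast; exact Nat.lt_floor_add_one y
  refine ⟨N, hN1, h1, ?_⟩
  have hNx : N ≤ ⌊x⌋₊ := by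
    apply Nat.le_floor
    refine le_trans ?_ h1
    exact le_self_pow₀ (by exact_mod_cast hN1) (by omega)
  have s1 : ∑ e ∈ Icc 1 ⌊x⌋₊, e ^ p * F (⌊x⌋₊ / e ^ (p + 1)) =
      ∑ e ∈ Icc 1 N, e ^ p * F (⌊x⌋₊ / e ^ (p + 1)) := by
    symm
    apply sum_subset (Icc_subset_Icc_right hNx)
    intro e he he'
    simp only [mem_Icc, not_and, not_le] at he he'
    have : ⌊x⌋₊ / e ^ (p + 1) = 0 := by
      apply Nat.div_eq_of_lt
      rw [Nat.floor_lt hx0.le]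
      refine h2.trans_le ?_
      push_cast
      have : ((N + 1 : ℕ) : ℝ) ≤ e := by exact_mod_cast he' he.1
      push_cast at this
      gcongr
    rw [this, hF, mul_zero]
  have ms := main_sum (p + 1) m (by omega) x N hN1 h1 h2
  have e1 : ∀ e ∈ Icc 1 N, (e : ℝ) ^ p * (a * (x / e ^ (p + 1)) * Real.log (x / e ^ (p + 1)) ^ m) =
      a * x * ((Real.log x - (p + 1 : ℕ) * Real.log e) ^ m / e) := by
    intro e he
    rw [mem_Icc] at he
    have : (0 : ℝ) < e := by exact_mod_cast he.1
    rw [Real.log_div (by positivity) (by positivity), Real.log_pow]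
    field_simp
    ring
  have e2 : |((∑ e ∈ Icc 1 ⌊x⌋₊, e ^ p * F (⌊x⌋₊ / e ^ (p + 1)) : ℕ) : ℝ) -
      a * x * ∑ e ∈ Icc 1 N, (Real.log x - (p + 1 : ℕ) * Real.log e) ^ m / e| ≤
      ∑ e ∈ Icc 1 N, e ^ p * E (x / e ^ (p + 1)) := by
    rw [s1, mul_sum, ← sum_congr rfl e1, Nat.cast_sum, ← sum_sub_distrib]
    refine (abs_sum_le_sum_abs _ _).trans (sum_le_sum fun e he => ?_)
    rw [mem_Icc] at he
    have he0 : (0 : ℝ) < e := by exact_mod_cast he.1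
    have hex : (1 : ℝ) ≤ x / e ^ (p + 1) := by
      rw [one_le_div (by positivity)]
      refine le_trans ?_ h1
      have : (e : ℝ) ≤ N := by exact_mod_cast he.2
      gcongr
    have := hE _ hex
    have hfl : ⌊x / (e : ℝ) ^ (p + 1)⌋₊ = ⌊x⌋₊ / e ^ (p + 1) := by
      rw [← Nat.floor_div_natCast]; push_cast; rfl
    rw [hfl] at this
    push_cast
    rw [← mul_sub, abs_mul, abs_of_pos (by positivity : (0 : ℝ) < (e : ℝ) ^ p)]
    gcongr
  have e3 : |a * x * ∑ e ∈ Icc 1 N, (Real.log x - (p + 1 : ℕ) * Real.log e) ^ m / e -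
      a / ((p + 1) * (m + 1)) * x * Real.log x ^ (m + 1)| ≤
      |a| * x * (((p + 1 : ℕ) ^ m + 1) * (1 + Real.log x) ^ m) := by
    have : a / ((p + 1) * (m + 1)) * x * Real.log x ^ (m + 1) =
      a * x * (Real.log x ^ (m + 1) / ((p + 1 : ℕ) * (m + 1))) := by push_cast; ring
    rw [this, ← mul_sub, abs_mul, abs_mul, abs_of_pos hx0]
    gcongr
  have := abs_sub_le (((∑ e ∈ Icc 1 ⌊x⌋₊, e ^ p * F (⌊x⌋₊ / e ^ (p + 1)) : ℕ) : ℝ))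
    (a * x * ∑ e ∈ Icc 1 N, (Real.log x - (p + 1 : ℕ) * Real.log e) ^ m / e)
    (a / ((p + 1) * (m + 1)) * x * Real.log x ^ (m + 1))
  linarith

theorem asym (k : ℕ) : ∃ C : ℝ, 0 ≤ C ∧ ∀ x : ℝ, 1 ≤ x →
    |(UU (k + 2) 0 ⌊x⌋₊ : ℝ) - 1 / ((k + 2).factorial * (k + 1).factorial) * x * Real.log x ^ (k + 1)|
      ≤ C * x * (1 + Real.log x) ^ k := by
  induction k with
  | zero =>
    refine ⟨3, by norm_num, fun x hx => ?_⟩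
    obtain ⟨N, hN1, hN, h⟩ := step (UU 1 0) (UU_zero_right _ _) 1 0 1 (fun _ => 1) (by
      intro y hy
      rw [UU_one]
      have := Nat.floor_le (by linarith : 0 ≤ y)
      have := Nat.lt_floor_add_one y
      rw [abs_le]; constructor <;> simp <;> linarith) x hx
    rw [UU_succ']
    have hs : ∑ e ∈ Icc 1 N, (e : ℝ) ^ 1 * 1 ≤ x := by
      calc _ ≤ ∑ e ∈ Icc 1 N, (N : ℝ) := by
            refine sum_le_sum fun e he => ?_
            rw [mem_Icc] at he
            simpa using he.2
        _ = (N : ℝ) ^ 2 := by simp; ring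
        _ ≤ x := hN
    norm_num [Nat.factorial] at h hs ⊢
    linarith
  | succ k ih =>
    obtain ⟨C, hC, ih⟩ := ih
    set a : ℝ := 1 / ((k + 2).factorial * (k + 1).factorial) with ha
    refine ⟨|a| * ((k + 2 + 1 : ℕ) ^ (k + 1) + 1) + C, by positivity, fun x hx => ?_⟩
    obtain ⟨N, hN1, hN, h⟩ := step (UU (k + 2) 0) (UU_zero_right _ _) a (k + 1) (k + 2) _ ih x hx
    rw [UU_succ']
    have hx0 : 0 < x := by linarith
    have hL : 0 ≤ Real.log x := Real.log_nonneg hx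
    have hfac : 1 / (((k + 1 + 2).factorial : ℝ) * (k + 1 + 1).factorial) =
        a / (((k + 2 : ℕ) + 1) * ((k + 1 : ℕ) + 1)) := by
      rw [ha, Nat.factorial_succ (k + 2), Nat.factorial_succ (k + 1)]
      push_cast
      field_simp
    rw [hfac]
    simp only [zero_add]
    refine h.trans ?_
    have hs : ∑ e ∈ Icc 1 N, (e : ℝ) ^ (k + 2) * (C * (x / e ^ (k + 2 + 1)) *
        (1 + Real.log (x / e ^ (k + 2 + 1))) ^ k) ≤ C * x * (1 + Real.log x) ^ (k + 1) := by
      have hNx : Real.log N ≤ Real.log x := by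
        have : (1 : ℝ) ≤ N := by exact_mod_cast hN1
        apply Real.log_le_log (by linarith)
        exact le_trans (le_self_pow₀ this (by omega)) hN
      have hh : ∑ e ∈ Icc 1 N, ((e : ℝ))⁻¹ ≤ 1 + Real.log x := by
        have := harmonic_le_one_add_log N
        rw [harmonic_eq_sum_Icc] at this
        push_cast at this
        linarith
      calc _ ≤ ∑ e ∈ Icc 1 N, C * x * (1 + Real.log x) ^ k * (e : ℝ)⁻¹ := by
            refine sum_le_sum fun e he => ?_
            rw [mem_Icc] at he
            have he0 : (0 : ℝ) < e := by exact_mod_cast he.1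
            have he1 : (1 : ℝ) ≤ e := by exact_mod_cast he.1
            have hex : (1 : ℝ) ≤ x / e ^ (k + 2 + 1) := by
              rw [one_le_div (by positivity)]
              refine le_trans ?_ hN
              have : (e : ℝ) ≤ N := by exact_mod_cast he.2
              gcongr
            have hl : Real.log (x / e ^ (k + 2 + 1)) ≤ Real.log x := by
              apply Real.log_le_log (by linarith)
              exact div_le_self hx0.le (one_le_pow₀ he1)
            have hl0 := Real.log_nonneg hex
            calc _ = C * x * (1 + Real.log (x / e ^ (k + 2 + 1))) ^ k * (e : ℝ)⁻¹ := by
                  field_simp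
                  ring
              _ ≤ _ := by gcongr
        _ = C * x * (1 + Real.log x) ^ k * ∑ e ∈ Icc 1 N, (e : ℝ)⁻¹ := by rw [mul_sum]
        _ ≤ C * x * (1 + Real.log x) ^ k * (1 + Real.log x) := by gcongr
        _ = _ := by ring
    have : (|a| * ((k + 2 + 1 : ℕ) ^ (k + 1) + 1) + C) * x * (1 + Real.log x) ^ (k + 1) =
      |a| * x * (((k + 2 + 1 : ℕ) ^ (k + 1) + 1) * (1 + Real.log x) ^ (k + 1)) +
        C * x * (1 + Real.log x) ^ (k + 1) := by ring
    rw [this]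
    gcongr

theorem final_asym (n : ℕ) (hn : 0 < n) :
    Asymptotics.IsEquivalent Filter.atTop (fun B : ℕ => (UU n 0 B : ℝ))
      (fun B : ℕ => 1 / ((n.factorial : ℝ) * (n - 1).factorial) * B * Real.log B ^ (n - 1)) := by
  obtain _ | _ | k := n
  · omega
  · simp only [zero_add, UU_one]
    simp
    rfl
  obtain ⟨C, hC, h⟩ := asym k
  simp only [show k + 1 + 1 = k + 2 from rfl, show k + 2 - 1 = k + 1 from rfl]
  have hlog : Filter.Tendsto (fun B : ℕ => Real.log B) Filter.atTop Filter.atTop :=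
    Real.tendsto_log_atTop.comp tendsto_natCast_atTop_atTop
  rw [Asymptotics.IsEquivalent]
  have hO : (fun B : ℕ => (UU (k + 2) 0 B : ℝ) -
      1 / (((k + 2).factorial : ℝ) * (k + 1).factorial) * B * Real.log B ^ (k + 1)) =O[Filter.atTop]
      (fun B : ℕ => (B : ℝ) * Real.log B ^ k) := by
    refine Asymptotics.IsBigO.of_bound (C * 2 ^ k) ?_
    filter_upwards [Filter.eventually_ge_atTop 1, hlog.eventually_ge_atTop 1] with B hB hl
    have hB' : (1 : ℝ) ≤ B := by exact_mod_cast hB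
    have := h B hB'
    rw [Nat.floor_natCast] at this
    rw [Real.norm_eq_abs, Real.norm_eq_abs]
    refine this.trans ?_
    rw [abs_of_nonneg (by positivity)]
    calc C * B * (1 + Real.log B) ^ k ≤ C * B * (2 * Real.log B) ^ k := by gcongr; linarith
      _ = _ := by rw [mul_pow]; ring
  refine hO.trans_isLittleO ?_
  have hne : (1 / (((k + 2).factorial : ℝ) * (k + 1).factorial)) ≠ 0 := by positivity
  have h1 : (fun _ : ℕ => (1 : ℝ)) =o[Filter.atTop] (fun B : ℕ => Real.log B) := by
    rw [Asymptotics.isLittleO_const_left]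
    right
    exact tendsto_norm_atTop_atTop.comp hlog
  have h2 := (Asymptotics.isBigO_refl (fun B : ℕ => (B : ℝ) * Real.log B ^ k) Filter.atTop).mul_isLittleO h1
  have h3 := h2.const_mul_right hne
  refine h3.congr (fun B => by simp) (fun B => by ring)

end

section
open Polynomial

/-- index of an ideal of ℤ[X] (0 if infinite) -/
noncomputable def idx (I : Ideal ℤ[X]) : ℕ := Nat.card (ℤ[X] ⧸ I)

/-- the positive generator of the ideal of constant coefficients (0 if this is zero) -/
noncomputable def lead (I : Ideal ℤ[X]) : ℕ := Ideal.absNorm (I.map (constantCoeff : ℤ[X] →+* ℤ))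

/-- the colon ideal (I : X) -/
noncomputable def col (I : Ideal ℤ[X]) : Ideal ℤ[X] :=
  Submodule.comap (LinearMap.mulLeft ℤ[X] X) I

theorem mem_col {I : Ideal ℤ[X]} {f : ℤ[X]} : f ∈ col I ↔ X * f ∈ I := by
  simp [col]

theorem constantCoeff_surj : Function.Surjective (constantCoeff : ℤ[X] →+* ℤ) := fun z => ⟨C z, by simp⟩

theorem mem_map_cc {I : Ideal ℤ[X]} {z : ℤ} :
    z ∈ I.map (constantCoeff : ℤ[X] →+* ℤ) ↔ ∃ b, C z + X * b ∈ I := by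
  rw [Ideal.mem_map_iff_of_surjective _ constantCoeff_surj]
  constructor
  · rintro ⟨f, hf, rfl⟩
    refine ⟨f.divX, ?_⟩
    have := divX_mul_X_add f
    rw [constantCoeff_apply, add_comm, mul_comm, this]
    exact hf
  · rintro ⟨b, hb⟩
    exact ⟨_, hb, by simp⟩

theorem lead_dvd_iff {I : Ideal ℤ[X]} {z : ℤ} :
    (lead I : ℤ) ∣ z ↔ ∃ b, C z + X * b ∈ I := by
  rw [← mem_map_cc, ← Ideal.mem_span_singleton, lead, Int.ideal_span_absNorm_eq_self]

/-- multiplication by X on the quotient -/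
noncomputable def mX (I : Ideal ℤ[X]) : (ℤ[X] ⧸ I) →ₗ[ℤ[X]] (ℤ[X] ⧸ I) := LinearMap.lsmul _ _ X

theorem mX_mk (I : Ideal ℤ[X]) (f : ℤ[X]) : mX I (Ideal.Quotient.mk I f) = Ideal.Quotient.mk I (X * f) := rfl

theorem card_range_mX (I : Ideal ℤ[X]) : Nat.card (LinearMap.range (mX I)) = idx (col I) := by
  have h1 : LinearMap.ker ((mX I).comp (Submodule.mkQ I)) = col I := by
    ext f
    rw [mem_col, LinearMap.mem_ker]
    exact Ideal.Quotient.eq_zero_iff_mem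
  have h2 : LinearMap.range ((mX I).comp (Submodule.mkQ I)) = LinearMap.range (mX I) := by
    rw [LinearMap.range_comp, Submodule.range_mkQ, Submodule.map_top]
  rw [idx, ← h1, ← h2]
  exact Nat.card_congr (LinearMap.quotKerEquivRange _).symm.toEquiv

theorem card_quot_range (I : Ideal ℤ[X]) :
    Nat.card ((ℤ[X] ⧸ I) ⧸ LinearMap.range (mX I)) = lead I := by
  let a := I.map (constantCoeff : ℤ[X] →+* ℤ)
  let φ : (ℤ[X] ⧸ I) →+* (ℤ ⧸ a) := Ideal.quotientMap a constantCoeff Ideal.le_comap_map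
  have hs : Function.Surjective φ := Ideal.quotientMap_surjective constantCoeff_surj
  have hk : (φ : (ℤ[X] ⧸ I) →+ (ℤ ⧸ a)).ker = (LinearMap.range (mX I)).toAddSubgroup := by
    ext x
    obtain ⟨f, rfl⟩ := Ideal.Quotient.mk_surjective x
    rw [AddMonoidHom.mem_ker]
    change φ (Ideal.Quotient.mk I f) = 0 ↔ Ideal.Quotient.mk I f ∈ LinearMap.range (mX I)
    rw [LinearMap.mem_range]
    rw [Ideal.quotientMap_mk, Ideal.Quotient.eq_zero_iff_mem, mem_map_cc]
    have hf := divX_mul_X_add f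
    constructor
    · rintro ⟨b, hb⟩
      refine ⟨Ideal.Quotient.mk I (f.divX - b), ?_⟩
      rw [mX_mk, Ideal.Quotient.mk_eq_mk_iff_sub_mem]
      have := I.neg_mem hb
      convert this using 1
      rw [constantCoeff_apply]
      linear_combination hf
    · rintro ⟨y, hy⟩
      obtain ⟨g, rfl⟩ := Ideal.Quotient.mk_surjective y
      rw [mX_mk, Ideal.Quotient.mk_eq_mk_iff_sub_mem] at hy
      refine ⟨f.divX - g, ?_⟩
      have := I.neg_mem hy
      convert this using 1
      rw [constantCoeff_apply]
      linear_combination hf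
  have e := QuotientAddGroup.quotientKerEquivOfSurjective (φ : (ℤ[X] ⧸ I) →+ (ℤ ⧸ a)) hs
  have : lead I = Nat.card (ℤ ⧸ a) := rfl
  rw [this, ← Nat.card_congr e.toEquiv]
  change (LinearMap.range (mX I)).toAddSubgroup.index = (φ : (ℤ[X] ⧸ I) →+ (ℤ ⧸ a)).ker.index
  rw [hk]

theorem idx_eq (I : Ideal ℤ[X]) : idx I = lead I * idx (col I) := by
  rw [← card_quot_range, ← card_range_mX]
  exact AddSubgroup.card_eq_card_quotient_mul_card_addSubgroup (LinearMap.range (mX I)).toAddSubgroup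

theorem card_ker (I : Ideal ℤ[X]) (h : idx I ≠ 0) : Nat.card (LinearMap.ker (mX I)) = lead I := by
  have h1 : idx I = Nat.card ((ℤ[X] ⧸ I) ⧸ LinearMap.ker (mX I)) * Nat.card (LinearMap.ker (mX I)) :=
    AddSubgroup.card_eq_card_quotient_mul_card_addSubgroup (LinearMap.ker (mX I)).toAddSubgroup
  rw [Nat.card_congr (LinearMap.quotKerEquivRange (mX I)).toEquiv, card_range_mX] at h1
  have h2 := idx_eq I
  rw [h2] at h
  have h3 : idx (col I) ≠ 0 := by intro h'; simp [h'] at h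
  rw [h2, mul_comm] at h1
  exact (Nat.eq_of_mul_eq_mul_left (Nat.pos_of_ne_zero h3) h1).symm

/-- solutions of `d + X b = 0` in the quotient -/
def sol (J : Ideal ℤ[X]) (d : ℕ) : Set (ℤ[X] ⧸ J) :=
  {b | Ideal.Quotient.mk J (C (d : ℤ)) + mX J b = 0}

theorem encard_sol (J : Ideal ℤ[X]) (h : idx J ≠ 0) (d : ℕ) :
    (sol J d).encard = if lead J ∣ d then (lead J : ℕ∞) else 0 := by
  split_ifs with hd
  · obtain ⟨b, hb⟩ := lead_dvd_iff.1 (Int.natCast_dvd_natCast.2 hd)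
    have : sol J d = Set.image (fun x => x + Ideal.Quotient.mk J b) (LinearMap.ker (mX J) : Set (ℤ[X] ⧸ J)) := by
      have hb' : Ideal.Quotient.mk J (C (d : ℤ)) + mX J (Ideal.Quotient.mk J b) = 0 := by
        rw [mX_mk, ← map_add]; exact Ideal.Quotient.eq_zero_iff_mem.2 hb
      ext x
      simp only [sol, Set.mem_ofPred_eq, Set.mem_image, SetLike.mem_coe, LinearMap.mem_ker]
      constructor
      · intro hx
        refine ⟨x - Ideal.Quotient.mk J b, ?_, by simp⟩
        rw [map_sub]; linear_combination hx - hb'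
      · rintro ⟨y, hy, rfl⟩
        rw [map_add]; linear_combination hy + hb'
    rw [this, (add_left_injective _).encard_image]
    have : Finite (ℤ[X] ⧸ J) := Nat.finite_of_card_ne_zero h
    rw [← card_ker J h, Set.encard, ENat.card_eq_coe_natCard]
    rfl
  · rw [Set.encard_eq_zero, Set.eq_empty_iff_forall_notMem]
    intro b hb
    obtain ⟨b, rfl⟩ := Ideal.Quotient.mk_surjective b
    apply hd
    rw [← Int.natCast_dvd_natCast]
    refine lead_dvd_iff.2 ⟨b, ?_⟩
    rw [sol, Set.mem_ofPred_eq, mX_mk, ← map_add] at hb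
    exact Ideal.Quotient.eq_zero_iff_mem.1 hb

/-- the ideals with given colon ideal and given leading number -/
def fib (J : Ideal ℤ[X]) (d : ℕ) : Set (Ideal ℤ[X]) := {I | col I = J ∧ lead I = d}

/-- the ideal `X J + (d + X b)` -/
noncomputable def mk' (J : Ideal ℤ[X]) (d : ℕ) (b : ℤ[X]) : Ideal ℤ[X] :=
  Ideal.span {X} * J ⊔ Ideal.span {C (d : ℤ) + X * b}

theorem mem_mk' {J : Ideal ℤ[X]} {d : ℕ} {b : ℤ[X]} (hb : C (d : ℤ) + X * b ∈ J) {f : ℤ[X]} :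
    f ∈ mk' J d b ↔ ∃ z : ℤ, ∃ j ∈ J, f = C z * (C (d : ℤ) + X * b) + X * j := by
  rw [mk', Submodule.mem_sup]
  constructor
  · rintro ⟨y, hy, w, hw, rfl⟩
    obtain ⟨j, hj, rfl⟩ := Ideal.mem_span_singleton_mul.1 hy
    obtain ⟨q, rfl⟩ := Ideal.mem_span_singleton.1 hw
    refine ⟨q.coeff 0, j + q.divX * (C (d : ℤ) + X * b), J.add_mem hj (J.mul_mem_left _ hb), ?_⟩
    linear_combination -(C (d : ℤ) + X * b) * divX_mul_X_add q
  · rintro ⟨z, j, hj, rfl⟩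
    refine ⟨X * j, Ideal.mem_span_singleton_mul.2 ⟨j, hj, rfl⟩, _,
      Ideal.mul_mem_left _ (C z) (Ideal.mem_span_singleton_self _), by ring⟩

theorem encard_fib (J : Ideal ℤ[X]) (d : ℕ) (hd : d ≠ 0) :
    (fib J d).encard = (sol J d).encard := by
  symm
  have key : ∀ (b : ℤ[X]), C (d : ℤ) + X * b ∈ J → mk' J d b ∈ fib J d := by
    intro b hb
    constructor
    · ext f
      rw [mem_col, mem_mk' hb]
      constructor
      · rintro ⟨z, j, hj, h⟩
        have h0 := congrArg (fun p => coeff p 0) h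
        simp [hd] at h0
        subst h0
        have : X * f = X * j := by simpa using h
        rw [mul_left_cancel₀ X_ne_zero this]; exact hj
      · intro hf
        exact ⟨0, f, hf, by simp⟩
    · rw [← Int.natCast_inj]
      apply Int.dvd_antisymm (by positivity) (by positivity)
      · rw [lead_dvd_iff]
        exact ⟨b, (mem_mk' hb).2 ⟨1, 0, J.zero_mem, by simp⟩⟩
      · obtain ⟨c, hc⟩ := lead_dvd_iff.1 (dvd_refl (lead (mk' J d b) : ℤ))
        obtain ⟨z, j, hj, h⟩ := (mem_mk' hb).1 hc
        have h0 := congrArg (fun p => coeff p 0) h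
        simp at h0
        exact ⟨z, by rw [h0, mul_comm]⟩
  have mem_sol : ∀ b : ℤ[X], Ideal.Quotient.mk J b ∈ sol J d ↔ C (d : ℤ) + X * b ∈ J := by
    intro b
    rw [sol, Set.mem_ofPred_eq, mX_mk, ← map_add]
    exact Ideal.Quotient.eq_zero_iff_mem
  have out : ∀ x : ℤ[X] ⧸ J, Ideal.Quotient.mk J (Quotient.out x) = x := fun x => Quotient.out_eq x
  have : Set.BijOn (fun x : ℤ[X] ⧸ J => mk' J d (Quotient.out x)) (sol J d) (fib J d) := by
    refine ⟨?_, ?_, ?_⟩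
    · intro x hx
      refine key _ ?_
      rw [← mem_sol, out]; exact hx
    · intro x hx y hy hxy
      rw [← out x, mem_sol] at hx
      rw [← out y, mem_sol] at hy
      have h1 : C (d : ℤ) + X * (Quotient.out x) ∈ mk' J d (Quotient.out x) :=
        (mem_mk' hx).2 ⟨1, 0, J.zero_mem, by simp⟩
      have hxy' : mk' J d (Quotient.out x) = mk' J d (Quotient.out y) := hxy
      rw [hxy', mem_mk' hy] at h1
      obtain ⟨z, j, hj, h⟩ := h1
      have h0 := congrArg (fun p => coeff p 0) h
      simp [hd] at h0
      subst h0
      rw [← out x, ← out y, Ideal.Quotient.mk_eq_mk_iff_sub_mem]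
      have : X * (Quotient.out x - Quotient.out y) = X * j := by
        rw [map_one] at h
        linear_combination h
      rw [mul_left_cancel₀ X_ne_zero this]; exact hj
    · rintro I ⟨h1, h2⟩
      obtain ⟨b, hb⟩ := lead_dvd_iff.1 (dvd_refl (lead I : ℤ))
      rw [h2] at hb
      have hIJ : I ≤ J := by
        intro f hf
        rw [← h1, mem_col]
        exact I.mul_mem_left _ hf
      refine ⟨Ideal.Quotient.mk J b, (mem_sol b).2 (hIJ hb), ?_⟩
      set b' := Quotient.out (Ideal.Quotient.mk J b) with hb'
      have hbb : b' - b ∈ J := by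
        rw [← Ideal.Quotient.mk_eq_mk_iff_sub_mem, hb', out]
      have hbI : C (d : ℤ) + X * b' ∈ I := by
        rw [← h1, mem_col] at hbb
        have := I.add_mem hb hbb
        convert this using 1
        ring
      change mk' J d b' = I
      ext f
      rw [mem_mk' (hIJ hbI)]
      constructor
      · rintro ⟨z, j, hj, rfl⟩
        rw [← h1, mem_col] at hj
        exact I.add_mem (I.mul_mem_left _ hbI) hj
      · intro hf
        have : (lead I : ℤ) ∣ f.coeff 0 := by
          rw [lead_dvd_iff]
          refine ⟨f.divX, ?_⟩
          convert hf using 1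
          linear_combination divX_mul_X_add f
        rw [h2] at this
        obtain ⟨z, hz⟩ := this
        refine ⟨z, f.divX - C z * b', ?_, ?_⟩
        · rw [← h1, mem_col]
          have := I.sub_mem hf (I.mul_mem_left (C z) hbI)
          convert this using 1
          have hf := divX_mul_X_add f
          rw [hz, map_mul] at hf
          linear_combination hf
        · have hf := divX_mul_X_add f
          rw [hz, map_mul] at hf
          linear_combination -hf
  rw [← this.image_eq, this.injOn.encard_image]

open scoped ENNReal

/-- the weight used for counting -/
noncomputable def gw (i B k d : ℕ) : ℝ≥0∞ := if 1 ≤ k ∧ k * d ^ i ≤ B then ((d ^ i : ℕ) : ℝ≥0∞) else 0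

/-- ideals of ℤ[X] containing X ^ n -/
abbrev IdX (n : ℕ) : Type := {I : Ideal ℤ[X] // (X : ℤ[X]) ^ n ∈ I}

/-- weighted ideal count -/
noncomputable def TU (n i B : ℕ) : ℝ≥0∞ := ∑' I : IdX n, gw i B (idx I.1) (lead I.1)

/-- colon ideal and leading number -/
noncomputable def colMap (n : ℕ) (I : IdX (n + 1)) : IdX n × ℕ :=
  (⟨col I.1, mem_col.2 (by rw [← pow_succ']; exact I.2)⟩, lead I.1)

theorem encard_fiber (n : ℕ) (p : IdX n × ℕ) :
    ENat.card {I : IdX (n + 1) // colMap n I = p} = (fib p.1.1 p.2).encard := by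
  rw [Set.encard]
  refine ENat.card_congr ⟨fun I => ⟨I.1.1, ?_⟩, fun I => ⟨⟨I.1, ?_⟩, ?_⟩, ?_, ?_⟩
  · have h := I.2
    exact ⟨congrArg (fun p => p.1.1) h, congrArg (fun p => p.2) h⟩
  · have h := p.1.2
    rw [← I.2.1, mem_col] at h
    rwa [pow_succ']
  · exact Prod.ext (Subtype.ext I.2.1) I.2.2
  · intro I; rfl
  · intro I; rfl

theorem tsum_step (n : ℕ) (g : ℕ → ℕ → ℝ≥0∞) (hg : ∀ d, g 0 d = 0) :
    ∑' I : IdX (n + 1), g (idx I.1) (lead I.1) =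
      ∑' J : IdX n, ∑' e : ℕ, (lead J.1 : ℝ≥0∞) * g (lead J.1 * e * idx J.1) (lead J.1 * e) := by
  rw [← (Equiv.sigmaFiberEquiv (colMap n)).tsum_eq, ENNReal.tsum_sigma', ENNReal.tsum_prod']
  refine tsum_congr fun J => ?_
  have h1 : ∀ d : ℕ, ∑' I : {I : IdX (n + 1) // colMap n I = (J, d)},
      g (idx (Equiv.sigmaFiberEquiv (colMap n) ⟨(J, d), I⟩).1)
        (lead (Equiv.sigmaFiberEquiv (colMap n) ⟨(J, d), I⟩).1) =
      ((fib J.1 d).encard : ℝ≥0∞) * g (d * idx J.1) d := by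
    intro d
    rw [← encard_fiber n (J, d), ← ENNReal.tsum_const]
    refine tsum_congr fun I => ?_
    have h := I.2
    have h2 : col I.1.1 = J.1 := congrArg (fun p => p.1.1) h
    have h3 : lead I.1.1 = d := congrArg (fun p => p.2) h
    change g (idx I.1.1) (lead I.1.1) = _
    rw [idx_eq, h2, h3]
  rw [tsum_congr h1]
  by_cases hJ : idx J.1 = 0
  · simp [hJ, hg]
  have hl : lead J.1 ≠ 0 := by
    intro h
    rw [idx_eq, h, zero_mul] at hJ
    exact hJ rfl
  have hinj : Function.Injective (fun e : ℕ => lead J.1 * e) :=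
    fun a b h => Nat.eq_of_mul_eq_mul_left (Nat.pos_of_ne_zero hl) h
  rw [← hinj.tsum_eq]
  · refine tsum_congr fun e => ?_
    by_cases he : e = 0
    · simp [he, hg]
    · rw [encard_fib _ _ (mul_ne_zero hl he), encard_sol _ hJ, if_pos (dvd_mul_right _ _)]
      simp
  · intro d hd
    rw [Function.mem_support] at hd
    have hd0 : d ≠ 0 := by
      rintro rfl
      simp [hg] at hd
    rw [encard_fib _ _ hd0, encard_sol _ hJ] at hd
    split_ifs at hd with h
    · obtain ⟨e, rfl⟩ := h
      exact ⟨e, rfl⟩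
    · simp at hd

theorem TU_eq (n i B : ℕ) : TU n i B = (UU n i B : ℝ≥0∞) := by
  induction n generalizing i B with
  | zero =>
    have hu : ∀ I : IdX 0, I = ⟨⊤, trivial⟩ := by
      intro I
      apply Subtype.ext
      exact (Ideal.eq_top_iff_one _).2 (by simpa using I.2)
    rw [TU, tsum_eq_single ⟨⊤, trivial⟩ (fun I hI => absurd (hu I) hI)]
    have h1 : idx ⊤ = 1 := by
      rw [idx]
      have : Subsingleton (ℤ[X] ⧸ (⊤ : Ideal ℤ[X])) := Ideal.Quotient.subsingleton_iff.2 rfl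
      exact Nat.card_unique
    have h2 : lead ⊤ = 1 := by
      rw [lead, Ideal.map_top, Ideal.absNorm_top]
    rw [h1, h2, UU, gw]
    simp
  | succ n ih =>
    rw [TU, tsum_step n (gw i B) (by intro d; simp [gw]), ENNReal.tsum_comm]
    have h1 : ∀ e : ℕ, ∑' J : IdX n, (lead J.1 : ℝ≥0∞) * gw i B (lead J.1 * e * idx J.1) (lead J.1 * e)
        = if e = 0 then 0 else ((e ^ i * UU n (i + 1) (B / e ^ (i + 1)) : ℕ) : ℝ≥0∞) := by
      intro e
      split_ifs with he
      · simp [he, gw]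
      rw [Nat.cast_mul, ← ih, TU, ← ENNReal.tsum_mul_left]
      refine tsum_congr fun J => ?_
      have hepos : 0 < e := Nat.pos_of_ne_zero he
      rw [gw, gw]
      by_cases hJ : idx J.1 = 0
      · simp [hJ]
      have hl : lead J.1 ≠ 0 := by
        intro h
        rw [idx_eq, h, zero_mul] at hJ
        exact hJ rfl
      have hc : (1 ≤ lead J.1 * e * idx J.1 ∧ lead J.1 * e * idx J.1 * (lead J.1 * e) ^ i ≤ B) ↔
          (1 ≤ idx J.1 ∧ idx J.1 * lead J.1 ^ (i + 1) ≤ B / e ^ (i + 1)) := by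
        rw [Nat.le_div_iff_mul_le (by positivity)]
        have e1 : lead J.1 * e * idx J.1 * (lead J.1 * e) ^ i =
          idx J.1 * lead J.1 ^ (i + 1) * e ^ (i + 1) := by ring
        rw [e1]
        have : 1 ≤ lead J.1 * e * idx J.1 := Nat.pos_of_ne_zero (by positivity)
        have : 1 ≤ idx J.1 := Nat.pos_of_ne_zero hJ
        tauto
      simp only [hc]
      split_ifs
      · push_cast; ring
      · simp
    rw [tsum_congr h1, tsum_eq_sum (s := Finset.Icc 1 B), UU, Nat.cast_sum]
    · refine Finset.sum_congr rfl fun e he => ?_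
      rw [Finset.mem_Icc] at he
      rw [if_neg (by omega)]
    · intro e he
      rw [Finset.mem_Icc] at he
      split_ifs with h0
      · rfl
      · rw [div_pow_zero (by omega), UU_zero_right]; simp

theorem idealCount_eq (n k : ℕ) :
    idealCount (ℤ[X] ⧸ Ideal.span {(X : ℤ[X]) ^ n}) k = Set.ncard {I : IdX n | idx I.1 = k} := by
  rw [idealCount]
  have hs : Function.Surjective (Ideal.Quotient.mk (Ideal.span {(X : ℤ[X]) ^ n})) :=
    Ideal.Quotient.mk_surjective
  have hidx : ∀ I : Ideal (ℤ[X] ⧸ Ideal.span {(X : ℤ[X]) ^ n}),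
      idx (I.comap (Ideal.Quotient.mk _)) = Nat.card ((ℤ[X] ⧸ Ideal.span {(X : ℤ[X]) ^ n}) ⧸ I) := by
    intro I
    rw [idx]
    refine Nat.card_congr (Equiv.ofBijective
      (Ideal.quotientMap I (Ideal.Quotient.mk (Ideal.span {(X : ℤ[X]) ^ n})) le_rfl) ⟨?_, ?_⟩)
    · exact Ideal.quotientMap_injective
    · exact Ideal.quotientMap_surjective hs
  refine Set.ncard_congr (fun I _ => ⟨I.comap (Ideal.Quotient.mk _), ?_⟩) ?_ ?_ ?_
  · rw [Ideal.mem_comap, Ideal.Quotient.eq_zero_iff_mem.2 (Ideal.mem_span_singleton_self _)]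
    exact I.zero_mem
  · intro I hI
    exact (hidx I).trans hI
  · intro I J _ _ h
    exact Ideal.comap_injective_of_surjective _ hs (congrArg Subtype.val h)
  · intro I hI
    have hc : (I.1.map (Ideal.Quotient.mk (Ideal.span {(X : ℤ[X]) ^ n}))).comap
        (Ideal.Quotient.mk _) = I.1 := by
      rw [Ideal.comap_map_of_surjective' _ hs, Ideal.mk_ker, sup_eq_left]
      rw [Ideal.span_singleton_le_iff_mem]
      exact I.2
    refine ⟨I.1.map (Ideal.Quotient.mk _), ?_, Subtype.ext hc⟩
    change Nat.card _ = k
    rw [← hidx, hc]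
    exact hI

theorem sum_idealCount (n B : ℕ) :
    ∑ k ∈ Finset.Icc 1 B, idealCount (ℤ[X] ⧸ Ideal.span {(X : ℤ[X]) ^ n}) k = UU n 0 B := by
  simp only [idealCount_eq]
  have h := TU_eq n 0 B
  set S : Set (IdX n) := {I | 1 ≤ idx I.1 ∧ idx I.1 ≤ B} with hS
  have h1 : TU n 0 B = (S.encard : ℝ≥0∞) := by
    rw [TU, ← ENNReal.tsum_set_one, tsum_subtype S (fun _ => (1 : ℝ≥0∞))]
    refine tsum_congr fun I => ?_
    simp [gw, Set.indicator, hS]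
  rw [h1] at h
  have h2 : S.encard = (UU n 0 B : ℕ∞) := by exact_mod_cast h
  have hfin : S.Finite := Set.finite_of_encard_eq_coe h2
  have h3 : S.ncard = UU n 0 B := by rw [Set.ncard, h2]; rfl
  rw [← h3, Set.ncard_eq_toFinset_card S hfin,
    Finset.card_eq_sum_card_fiberwise (f := fun I : IdX n => idx I.1) (t := Finset.Icc 1 B)]
  · refine Finset.sum_congr rfl fun k hk => ?_
    rw [← Set.ncard_coe_finset]
    congr 1
    ext I
    rw [Finset.mem_Icc] at hk
    simp only [hS, Set.mem_ofPred_eq, Finset.coe_filter, Set.Finite.mem_toFinset]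
    constructor
    · rintro rfl; exact ⟨hk, rfl⟩
    · exact fun h => h.2
  · intro I hI
    simpa [hS] using hI

end

/-- For `R = ℤ[X]/(X^n)`, the partial sums `∑_{k ≤ B} a_R(k)` are asymptotically
equivalent to `c · B · (log B)^{n-1}` with `c = 1/(n!(n-1)!)`. -/
theorem ideal_growth_int_poly_quot_pow (n : ℕ) (hn : 0 < n)
    (c : ℝ) (hc : c = 1 / (Nat.factorial n * Nat.factorial (n - 1))) :
    Asymptotics.IsEquivalent Filter.atTop
      (fun B : ℕ =>
        ((∑ k ∈ Finset.Icc 1 B,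
          idealCount (Polynomial ℤ ⧸ Ideal.span {(Polynomial.X : Polynomial ℤ) ^ n}) k : ℕ) : ℝ))
      (fun B : ℕ => c * B * Real.log B ^ (n - 1)) := by
  simp only [sum_idealCount]
  subst hc
  exact final_asym n hn
end
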